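/- Let f : ℝ^d → ℝ be L-smooth, let μ > 0, and let f_μ be its Gaussian smoothing. Then for every x ∈ ℝ^d, E_u[ ‖ĝ_μ(x; u) − ∇f_μ(x)‖² ] ≤ 2(2d + 9) ‖∇f(x)‖² + μ² L² (d + 6)³, where u ~ N(0, I_d). -/

import Mathlib

open MeasureTheory ProbabilityTheory

/-- The standard multivariate Gaussian distribution `N(0, I_d)` on `ℝ^d`. -/
noncomputable def stdGaussian (d : ℕ) : Measure (EuclideanSpace ℝ (Fin d)) :=
  (Measure.pi fun _ : Fin d => gaussianReal 0 1).map
    (MeasurableEquiv.toLp 2 (Fin d → ℝ))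

/-!
Write `ĝ_μ(x; u) - ∇f_μ(x)` as the linear part `⟪∇f(x), u⟫ u - ∇f(x)`, whose second moment is
exactly `(d + 1) ‖∇f(x)‖²`, plus a Taylor remainder of norm at most `μ L ‖u‖³ / 2`, minus the bias
`∇f_μ(x) - ∇f(x) = E[∇f(x + μ u) - ∇f(x)]`, of norm at most `μ L √d`. The moments `E ‖u‖ ^ (2k)` are
read off the iterated derivatives of `E exp(s ‖u‖²) = (1 - 2s) ^ (-d/2)` at `s = 0`, and rotation
invariance gives `d · E[⟪g, u⟫² ‖u‖ ^ k] = ‖g‖² E ‖u‖ ^ (k + 2)`.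
-/

open Module
open scoped NNReal RealInnerProductSpace Gradient

section Norm

lemma norm_add_sub_sq_le {E : Type*} [SeminormedAddCommGroup E] (a b c : E) :
    ‖a + b - c‖ ^ 2 ≤ 2 * ‖a‖ ^ 2 + 4 * ‖b‖ ^ 2 + 4 * ‖c‖ ^ 2 := by
  calc ‖a + b - c‖ ^ 2 ≤ (‖a‖ + (‖b‖ + ‖c‖)) ^ 2 := by
        gcongr
        rw [add_sub_assoc]
        exact (norm_add_le _ _).trans (add_le_add_right (norm_sub_le _ _) _)
    _ ≤ 2 * (‖a‖ ^ 2 + (‖b‖ + ‖c‖) ^ 2) := add_sq_le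
    _ ≤ 2 * (‖a‖ ^ 2 + 2 * (‖b‖ ^ 2 + ‖c‖ ^ 2)) := by
        gcongr
        exact add_sq_le
    _ = 2 * ‖a‖ ^ 2 + 4 * ‖b‖ ^ 2 + 4 * ‖c‖ ^ 2 := by ring

lemma norm_inner_smul_sub_sq {E : Type*} [NormedAddCommGroup E] [InnerProductSpace ℝ E]
    (g u : E) :
    ‖⟪g, u⟫ • u - g‖ ^ 2 = ⟪g, u⟫ ^ 2 * ‖u‖ ^ 2 - 2 * ⟪g, u⟫ ^ 2 + ‖g‖ ^ 2 := by
  rw [norm_sub_sq_real, norm_smul, real_inner_smul_left, real_inner_comm, mul_pow,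
    Real.norm_eq_abs, sq_abs]
  ring

end Norm

section RotationInvariant

variable {E : Type*} [NormedAddCommGroup E] [InnerProductSpace ℝ E]
  [MeasurableSpace E] [BorelSpace E]

lemma integrable_inner_sq_mul_norm_pow {ν : Measure E} (k : ℕ)
    (hν : Integrable (fun u => ‖u‖ ^ (k + 2)) ν) (g : E) :
    Integrable (fun u => ⟪g, u⟫ ^ 2 * ‖u‖ ^ k) ν := by
  refine (hν.const_mul (‖g‖ ^ 2)).mono' (by fun_prop) (.of_forall fun u => ?_)
  rw [Real.norm_of_nonneg (by positivity)]
  calc ⟪g, u⟫ ^ 2 * ‖u‖ ^ k ≤ (‖g‖ * ‖u‖) ^ 2 * ‖u‖ ^ k := by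
        rw [← sq_abs ⟪g, u⟫]
        gcongr
        exact abs_real_inner_le_norm g u
    _ = ‖g‖ ^ 2 * ‖u‖ ^ (k + 2) := by ring

-- A reflection carries `v` to any other vector of the same norm.
lemma integral_inner_sq_mul_norm_pow_congr_of_norm_eq {ν : Measure E}
    (hν : ∀ e : E ≃ₗᵢ[ℝ] E, ν.map e = ν) (k : ℕ) {v w : E} (h : ‖v‖ = ‖w‖) :
    ∫ u, ⟪v, u⟫ ^ 2 * ‖u‖ ^ k ∂ν = ∫ u, ⟪w, u⟫ ^ 2 * ‖u‖ ^ k ∂ν := by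
  let e := (ℝ ∙ (v - w))ᗮ.reflection
  have he : e v = w := Submodule.reflection_sub h
  conv_rhs => rw [← hν e, integral_map (by fun_prop) (by fun_prop), ← he]
  simp only [e.inner_map_map, e.norm_map]

lemma finrank_mul_integral_inner_sq_mul_norm_pow [FiniteDimensional ℝ E] {ν : Measure E}
    (hν : ∀ e : E ≃ₗᵢ[ℝ] E, ν.map e = ν) (k : ℕ) (hk : Integrable (fun u => ‖u‖ ^ (k + 2)) ν)
    (g : E) :
    finrank ℝ E * ∫ u, ⟪g, u⟫ ^ 2 * ‖u‖ ^ k ∂ν = ‖g‖ ^ 2 * ∫ u, ‖u‖ ^ (k + 2) ∂ν := by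
  let b := stdOrthonormalBasis ℝ E
  have hcoord (i : Fin (finrank ℝ E)) :
      ∫ u, ⟪g, u⟫ ^ 2 * ‖u‖ ^ k ∂ν = ‖g‖ ^ 2 * ∫ u, ⟪b i, u⟫ ^ 2 * ‖u‖ ^ k ∂ν := by
    rw [integral_inner_sq_mul_norm_pow_congr_of_norm_eq hν k (w := ‖g‖ • b i)
      (by simp [norm_smul]), ← integral_const_mul]
    simp only [real_inner_smul_left, mul_pow, mul_assoc]
  calc finrank ℝ E * ∫ u, ⟪g, u⟫ ^ 2 * ‖u‖ ^ k ∂ν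
      = ∑ i, ‖g‖ ^ 2 * ∫ u, ⟪b i, u⟫ ^ 2 * ‖u‖ ^ k ∂ν := by
        rw [← Finset.sum_congr rfl fun i _ => hcoord i]
        simp
    _ = ‖g‖ ^ 2 * ∫ u, ∑ i, ⟪b i, u⟫ ^ 2 * ‖u‖ ^ k ∂ν := by
        rw [← Finset.mul_sum,
          integral_finsetSum _ fun i _ => integrable_inner_sq_mul_norm_pow k hk (b i)]
    _ = ‖g‖ ^ 2 * ∫ u, ‖u‖ ^ (k + 2) ∂ν := by
        simp_rw [← Finset.sum_mul, b.sum_sq_inner_right, ← pow_add, add_comm 2 k]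

end RotationInvariant

section GaussianMoments

variable {E : Type*} [NormedAddCommGroup E] [InnerProductSpace ℝ E] [FiniteDimensional ℝ E]
  [MeasurableSpace E] [BorelSpace E]

-- For `s ≥ 1 / 2` the integral diverges, and both sides take the junk value `0`.
lemma mgf_sq_gaussianReal (s : ℝ) :
    mgf (fun y => y ^ 2) (gaussianReal 0 1) s = (√(1 - 2 * s))⁻¹ := by
  have hexp (y : ℝ) : gaussianPDFReal 0 1 y • Real.exp (s * y ^ 2) =
      (√(2 * Real.pi))⁻¹ * Real.exp (-((1 - 2 * s) / 2) * y ^ 2) := by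
    simp only [gaussianPDFReal_def, smul_eq_mul, mul_assoc, ← Real.exp_add, NNReal.coe_one]
    ring_nf
  simp_rw [mgf, integral_gaussianReal_eq_integral_smul one_ne_zero, hexp]
  rw [integral_const_mul, integral_gaussian, ← Real.sqrt_inv, ← Real.sqrt_inv,
    ← Real.sqrt_mul (by positivity)]
  congr 1
  field_simp

lemma mgf_norm_sq_stdGaussian {s : ℝ} (hs : s < 1 / 2) :
    mgf (fun u => ‖u‖ ^ 2) (stdGaussian E) s = (1 - 2 * s) ^ (-(finrank ℝ E : ℝ) / 2) := by
  let b := stdOrthonormalBasis ℝ E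
  have hnorm (y : Fin (finrank ℝ E) → ℝ) : ‖∑ i, y i • b i‖ ^ 2 = ∑ i, y i ^ 2 := by
    rw [← b.sum_sq_inner_right]
    simp [b.orthonormal.inner_right_fintype]
  rw [mgf, stdGaussian_eq_map_pi_orthonormalBasis b,
    integral_map (Measurable.aemeasurable (by fun_prop)) (by fun_prop)]
  simp_rw [hnorm, Finset.mul_sum, Real.exp_sum]
  rw [integral_fintype_prod_eq_pow fun y : ℝ => Real.exp (s * y ^ 2)]
  change mgf _ _ _ ^ _ = _
  rw [mgf_sq_gaussianReal, Fintype.card_fin, Real.sqrt_eq_rpow, ← Real.rpow_neg (by linarith),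
    ← Real.rpow_mul_natCast (by linarith)]
  congr 1
  ring

lemma mem_interior_integrableExpSet_norm_sq_stdGaussian {s : ℝ} (hs : s < 1 / 2) :
    s ∈ interior (integrableExpSet (fun u => ‖u‖ ^ 2) (stdGaussian E)) := by
  refine interior_maximal (fun t ht => .of_integral_ne_zero ?_) isOpen_Iio hs
  change mgf _ _ _ ≠ _
  rw [mgf_norm_sq_stdGaussian ht]
  exact (Real.rpow_pos_of_pos (by linarith [Set.mem_Iio.1 ht]) _).ne'

lemma integral_norm_sq_pow_mul_exp_stdGaussian (k : ℕ) {s : ℝ} (hs : s < 1 / 2) :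
    ∫ u, (‖u‖ ^ 2) ^ k * Real.exp (s * ‖u‖ ^ 2) ∂stdGaussian E =
      (∏ j ∈ Finset.range k, ((finrank ℝ E : ℝ) + 2 * j)) *
        (1 - 2 * s) ^ (-(finrank ℝ E : ℝ) / 2 - k) := by
  induction k generalizing s with
  | zero => simpa [mgf] using mgf_norm_sq_stdGaussian (E := E) hs
  | succ k ih =>
    have hbase : HasDerivAt (fun t : ℝ => 1 - 2 * t) (-2) s := by
      simpa using ((hasDerivAt_id s).const_mul 2).const_sub 1
    have hclosed := (hbase.rpow_const (p := -(finrank ℝ E : ℝ) / 2 - k)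
      (.inl (by linarith))).const_mul (∏ j ∈ Finset.range k, ((finrank ℝ E : ℝ) + 2 * j))
    have hmoment := hasDerivAt_integral_pow_mul_exp_real
      (mem_interior_integrableExpSet_norm_sq_stdGaussian (E := E) hs) k
    rw [hmoment.unique (hclosed.congr_of_eventuallyEq
      (Filter.eventuallyEq_of_mem (Iio_mem_nhds hs) fun t ht => ih ht)),
      Finset.prod_range_succ, Nat.cast_succ, ← sub_sub]
    ring

lemma integral_norm_pow_stdGaussian (k : ℕ) :
    ∫ u, ‖u‖ ^ (2 * k) ∂stdGaussian E =
      ∏ j ∈ Finset.range k, ((finrank ℝ E : ℝ) + 2 * j) := by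
  simpa [pow_mul] using integral_norm_sq_pow_mul_exp_stdGaussian (E := E) k (s := 0) (by norm_num)

lemma integrable_norm_pow_stdGaussian (n : ℕ) :
    Integrable (fun u => ‖u‖ ^ n) (stdGaussian E) :=
  (IsGaussian.memLp_id (stdGaussian E) n (by simp)).integrable_norm_pow'

lemma integral_inner_sq_mul_norm_pow_stdGaussian (k : ℕ) (g : E) :
    ∫ u, ⟪g, u⟫ ^ 2 * ‖u‖ ^ (2 * k) ∂stdGaussian E =
      ‖g‖ ^ 2 * ∏ j ∈ Finset.range k, ((finrank ℝ E : ℝ) + 2 * (j + 1)) := by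
  obtain _ | _ := subsingleton_or_nontrivial E
  · simp [Subsingleton.elim g 0]
  · have hn : (finrank ℝ E : ℝ) ≠ 0 := Nat.cast_ne_zero.2 finrank_pos.ne'
    have h := finrank_mul_integral_inner_sq_mul_norm_pow (ν := stdGaussian E)
      (fun e => stdGaussian_map e) (2 * k) (integrable_norm_pow_stdGaussian _) g
    rw [← mul_add_one, integral_norm_pow_stdGaussian, Finset.prod_range_succ'] at h
    refine mul_left_cancel₀ hn (h.trans ?_)
    push_cast
    ring

lemma integrable_inner_sq_mul_norm_pow_stdGaussian (k : ℕ) (g : E) :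
    Integrable (fun u => ⟪g, u⟫ ^ 2 * ‖u‖ ^ k) (stdGaussian E) :=
  integrable_inner_sq_mul_norm_pow k (integrable_norm_pow_stdGaussian _) g

lemma integrable_inner_sq_stdGaussian (g : E) :
    Integrable (fun u => ⟪g, u⟫ ^ 2) (stdGaussian E) := by
  simpa using integrable_inner_sq_mul_norm_pow_stdGaussian 0 g

lemma integrable_norm_inner_smul_sub_sq_stdGaussian (g : E) :
    Integrable (fun u => ‖⟪g, u⟫ • u - g‖ ^ 2) (stdGaussian E) := by
  simp_rw [norm_inner_smul_sub_sq]
  exact ((integrable_inner_sq_mul_norm_pow_stdGaussian 2 g).sub'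
    ((integrable_inner_sq_stdGaussian g).const_mul 2)).fun_add (integrable_const _)

lemma integral_norm_inner_smul_sub_sq_stdGaussian (g : E) :
    ∫ u, ‖⟪g, u⟫ • u - g‖ ^ 2 ∂stdGaussian E = (finrank ℝ E + 1) * ‖g‖ ^ 2 := by
  have hquartic := integrable_inner_sq_mul_norm_pow_stdGaussian 2 g
  have hquadratic := (integrable_inner_sq_stdGaussian g).const_mul 2
  have hinner_sq : ∫ u, ⟪g, u⟫ ^ 2 ∂stdGaussian E = ‖g‖ ^ 2 := by
    simpa using integral_inner_sq_mul_norm_pow_stdGaussian 0 g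
  have hinner_sq_mul : ∫ u, ⟪g, u⟫ ^ 2 * ‖u‖ ^ 2 ∂stdGaussian E =
      ‖g‖ ^ 2 * (finrank ℝ E + 2) := by
    simpa using integral_inner_sq_mul_norm_pow_stdGaussian 1 g
  simp_rw [norm_inner_smul_sub_sq]
  rw [integral_add (hquartic.sub' hquadratic) (integrable_const _),
    integral_sub hquartic hquadratic, integral_const_mul, hinner_sq, hinner_sq_mul,
    integral_const, probReal_univ, one_smul]
  ring

end GaussianMoments

section Smoothness

variable {E F Ω : Type*} [NormedAddCommGroup E] [NormedAddCommGroup F] {mΩ : MeasurableSpace Ω}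
  {P : Measure Ω} {X : Ω → E} {f : E → F} {K : ℝ≥0}

lemma sq_integral_norm_le_integral_norm_sq [IsProbabilityMeasure P] (hX : MemLp X 2 P) :
    (∫ ω, ‖X ω‖ ∂P) ^ 2 ≤ ∫ ω, ‖X ω‖ ^ 2 ∂P := by
  have h := variance_nonneg (fun ω => ‖X ω‖) P
  rw [variance_eq_sub hX.norm] at h
  exact sub_nonneg.1 h

lemma integrable_comp_add_of_lipschitzWith [IsFiniteMeasure P] (hf : LipschitzWith K f)
    (hX : Integrable X P) (x : E) : Integrable (fun ω => f (x + X ω)) P := by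
  have hdiff : Integrable (fun ω => f (x + X ω) - f x) P := by
    refine (hX.norm.const_mul K).mono' ?_ (.of_forall fun ω => ?_)
    · exact ((hf.continuous.comp (continuous_const_add x)).comp_aestronglyMeasurable hX.1).sub
        aestronglyMeasurable_const
    · simpa using hf.norm_sub_le (x + X ω) x
  simpa using hdiff.fun_add (integrable_const (f x))

variable [NormedSpace ℝ E] [NormedSpace ℝ F]

lemma norm_sub_sub_fderiv_le_of_lipschitzWith_fderiv (hf : Differentiable ℝ f)
    (hK : LipschitzWith K (fderiv ℝ f)) (x v : E) :
    ‖f (x + v) - f x - fderiv ℝ f x v‖ ≤ K / 2 * ‖v‖ ^ 2 := by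
  have hremainder (t : ℝ) : HasDerivAt (fun t : ℝ => f (x + t • v) - f x - t • fderiv ℝ f x v)
      (fderiv ℝ f (x + t • v) v - fderiv ℝ f x v) t := by
    have hline : HasDerivAt (fun t : ℝ => x + t • v) v t := by
      simpa using ((hasDerivAt_id t).smul_const v).const_add x
    have h := (hf (x + t • v)).hasFDerivAt.comp_hasDerivAt t hline
    simpa using (h.sub_const (f x)).fun_sub ((hasDerivAt_id t).smul_const (fderiv ℝ f x v))
  have hbarrier (t : ℝ) :
      HasDerivAt (fun t : ℝ => K / 2 * ‖v‖ ^ 2 * t ^ 2) (K * ‖v‖ ^ 2 * t) t := by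
    refine ((hasDerivAt_pow 2 t).const_mul (K / 2 * ‖v‖ ^ 2)).congr_deriv ?_
    push_cast
    ring
  have hslope (t : ℝ) (ht : t ∈ Set.Ico (0 : ℝ) 1) :
      ‖fderiv ℝ f (x + t • v) v - fderiv ℝ f x v‖ ≤ K * ‖v‖ ^ 2 * t := by
    calc ‖fderiv ℝ f (x + t • v) v - fderiv ℝ f x v‖
        ≤ ‖fderiv ℝ f (x + t • v) - fderiv ℝ f x‖ * ‖v‖ :=
          (fderiv ℝ f (x + t • v) - fderiv ℝ f x).le_opNorm v
      _ ≤ K * ‖x + t • v - x‖ * ‖v‖ := by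
          gcongr
          exact hK.norm_sub_le _ _
      _ = K * ‖v‖ ^ 2 * t := by
          rw [add_sub_cancel_left, norm_smul, Real.norm_of_nonneg ht.1]
          ring
  simpa using image_norm_le_of_norm_deriv_right_le_deriv_boundary
    (fun t _ => (hremainder t).continuousAt.continuousWithinAt)
    (fun t _ => (hremainder t).hasDerivWithinAt) (by simp) hbarrier hslope
    (Set.right_mem_Icc.2 zero_le_one)

lemma integrable_comp_add_of_lipschitzWith_fderiv [IsFiniteMeasure P] (hf : Differentiable ℝ f)
    (hK : LipschitzWith K (fderiv ℝ f)) (hX : MemLp X 2 P) (x : E) :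
    Integrable (fun ω => f (x + X ω)) P := by
  have hX₁ : Integrable X P := hX.integrable one_le_two
  have hlinear : Integrable (fun ω => fderiv ℝ f x (X ω)) P :=
    (fderiv ℝ f x).integrable_comp hX₁
  have hmeas : AEStronglyMeasurable (fun ω => f (x + X ω)) P :=
    (hf.continuous.comp (continuous_const_add x)).comp_aestronglyMeasurable hX₁.1
  have hremainder : Integrable (fun ω => f (x + X ω) - f x - fderiv ℝ f x (X ω)) P :=
    ((hX.integrable_norm_pow two_ne_zero).const_mul (K / 2 : ℝ)).mono'
      ((hmeas.sub aestronglyMeasurable_const).sub hlinear.1)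
      (.of_forall fun ω => norm_sub_sub_fderiv_le_of_lipschitzWith_fderiv hf hK x (X ω))
  simpa using (hremainder.fun_add hlinear).fun_add (integrable_const (f x))

lemma hasFDerivAt_integral_comp_add [IsFiniteMeasure P] (hf : Differentiable ℝ f)
    (hK : LipschitzWith K (fderiv ℝ f)) (hX : MemLp X 2 P) (x : E) :
    HasFDerivAt (fun y => ∫ ω, f (y + X ω) ∂P) (∫ ω, fderiv ℝ f (x + X ω) ∂P) x := by
  have hderiv : Integrable (fun ω => fderiv ℝ f (x + X ω)) P :=
    integrable_comp_add_of_lipschitzWith hK (hX.integrable one_le_two) x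
  refine hasFDerivAt_integral_of_dominated_of_fderiv_le (𝕜 := ℝ)
    (F' := fun y ω => fderiv ℝ f (y + X ω)) (bound := fun ω => ‖fderiv ℝ f (x + X ω)‖ + K)
    (Metric.ball_mem_nhds x one_pos)
    (.of_forall fun y => (integrable_comp_add_of_lipschitzWith_fderiv hf hK hX y).1)
    (integrable_comp_add_of_lipschitzWith_fderiv hf hK hX x) hderiv.1
    (.of_forall fun ω y hy => ?_) (hderiv.norm.add (integrable_const _))
    (.of_forall fun ω y _ => (hasFDerivAt_comp_add_right _).2 (hf (y + X ω)).hasFDerivAt)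
  calc ‖fderiv ℝ f (y + X ω)‖
      ≤ ‖fderiv ℝ f (x + X ω)‖ + ‖fderiv ℝ f (y + X ω) - fderiv ℝ f (x + X ω)‖ :=
        norm_le_norm_add_norm_sub' _ _
    _ ≤ ‖fderiv ℝ f (x + X ω)‖ + K * ‖y - x‖ := by
        gcongr
        simpa using hK.norm_sub_le (y + X ω) (x + X ω)
    _ ≤ ‖fderiv ℝ f (x + X ω)‖ + K := by
        gcongr
        exact mul_le_of_le_one_right K.coe_nonneg (mem_ball_iff_norm.1 hy).le

lemma norm_fderiv_integral_comp_add_sub_sq_le [CompleteSpace F] [IsProbabilityMeasure P]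
    (hf : Differentiable ℝ f) (hK : LipschitzWith K (fderiv ℝ f)) (hX : MemLp X 2 P) (x : E) :
    ‖fderiv ℝ (fun y => ∫ ω, f (y + X ω) ∂P) x - fderiv ℝ f x‖ ^ 2 ≤
      K ^ 2 * ∫ ω, ‖X ω‖ ^ 2 ∂P := by
  have hX₁ : Integrable X P := hX.integrable one_le_two
  have hbias : fderiv ℝ (fun y => ∫ ω, f (y + X ω) ∂P) x - fderiv ℝ f x =
      ∫ ω, (fderiv ℝ f (x + X ω) - fderiv ℝ f x) ∂P := by
    rw [(hasFDerivAt_integral_comp_add hf hK hX x).fderiv,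
      integral_sub (integrable_comp_add_of_lipschitzWith hK hX₁ x) (integrable_const _)]
    simp
  have hnorm : ‖∫ ω, (fderiv ℝ f (x + X ω) - fderiv ℝ f x) ∂P‖ ≤ K * ∫ ω, ‖X ω‖ ∂P := by
    rw [← integral_const_mul]
    exact norm_integral_le_of_norm_le (hX₁.norm.const_mul _)
      (.of_forall fun ω => by simpa using hK.norm_sub_le (x + X ω) x)
  calc ‖fderiv ℝ (fun y => ∫ ω, f (y + X ω) ∂P) x - fderiv ℝ f x‖ ^ 2
      ≤ (K * ∫ ω, ‖X ω‖ ∂P) ^ 2 := by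
        rw [hbias]
        gcongr
    _ ≤ K ^ 2 * ∫ ω, ‖X ω‖ ^ 2 ∂P := by
        rw [mul_pow]
        gcongr
        exact sq_integral_norm_le_integral_norm_sq hX

end Smoothness

section Estimator

variable {E : Type*} [NormedAddCommGroup E] [InnerProductSpace ℝ E]

lemma lipschitzWith_fderiv_of_lipschitzWith_gradient [CompleteSpace E] {f : E → ℝ} {K : ℝ≥0}
    (hK : LipschitzWith K (∇ f)) : LipschitzWith K (fderiv ℝ f) := by
  rw [← toDual_comp_gradient]
  simpa using (InnerProductSpace.toDual ℝ E).lipschitz.comp hK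

/-- The two-point gradient estimator `ĝ_μ(x; u)` of `f` at `x` in the direction `u`,
with the junk value `0` for `μ = 0`. -/
noncomputable def twoPointGradientEstimator (f : E → ℝ) (μ : ℝ) (x u : E) : E :=
  ((f (x + μ • u) - f x) / μ) • u

lemma norm_twoPointGradientEstimator_sub_sq_le [CompleteSpace E] {f : E → ℝ} {K : ℝ≥0} {μ : ℝ}
    (hμ : μ ≠ 0) (hf : Differentiable ℝ f) (hK : LipschitzWith K (∇ f)) (x u : E) :
    ‖twoPointGradientEstimator f μ x u - ⟪∇ f x, u⟫ • u‖ ^ 2 ≤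
      μ ^ 2 * K ^ 2 / 4 * ‖u‖ ^ 6 := by
  have htaylor := norm_sub_sub_fderiv_le_of_lipschitzWith_fderiv hf
    (lipschitzWith_fderiv_of_lipschitzWith_gradient hK) x (μ • u)
  rw [map_smul, smul_eq_mul, ← inner_gradient_left, norm_smul] at htaylor
  have hquotient : |(f (x + μ • u) - f x) / μ - ⟪∇ f x, u⟫| ≤ |μ| * K / 2 * ‖u‖ ^ 2 := by
    refine le_of_mul_le_mul_left ?_ (abs_pos.2 hμ)
    calc |μ| * |(f (x + μ • u) - f x) / μ - ⟪∇ f x, u⟫|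
        = |f (x + μ • u) - f x - μ * ⟪∇ f x, u⟫| := by
          rw [← abs_mul, mul_sub, mul_div_cancel₀ _ hμ]
      _ ≤ K / 2 * (|μ| * ‖u‖) ^ 2 := htaylor
      _ = |μ| * (|μ| * K / 2 * ‖u‖ ^ 2) := by ring
  calc ‖twoPointGradientEstimator f μ x u - ⟪∇ f x, u⟫ • u‖ ^ 2
      = (|(f (x + μ • u) - f x) / μ - ⟪∇ f x, u⟫| * ‖u‖) ^ 2 := by
        rw [twoPointGradientEstimator, ← sub_smul, norm_smul, Real.norm_eq_abs]
    _ ≤ (|μ| * K / 2 * ‖u‖ ^ 2 * ‖u‖) ^ 2 := by gcongr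
    _ = |μ| ^ 2 * K ^ 2 / 4 * ‖u‖ ^ 6 := by ring
    _ = μ ^ 2 * K ^ 2 / 4 * ‖u‖ ^ 6 := by rw [sq_abs]

variable [FiniteDimensional ℝ E] [MeasurableSpace E] [BorelSpace E]

/-- The Gaussian smoothing `f_μ` of `f`, whose gradient the two-point estimator approximates;
it takes the junk value `0` where the integral diverges. -/
noncomputable def gaussianSmoothing (f : E → ℝ) (μ : ℝ) (x : E) : ℝ :=
  ∫ u, f (x + μ • u) ∂stdGaussian E

variable {f : E → ℝ} {K : ℝ≥0} {μ : ℝ}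

lemma norm_gradient_gaussianSmoothing_sub_sq_le (hf : Differentiable ℝ f)
    (hK : LipschitzWith K (∇ f)) (x : E) :
    ‖∇ (gaussianSmoothing f μ) x - ∇ f x‖ ^ 2 ≤ μ ^ 2 * K ^ 2 * finrank ℝ E := by
  have hmem : MemLp (fun u : E => μ • u) 2 (stdGaussian E) :=
    (IsGaussian.memLp_id (stdGaussian E) 2 (by simp)).const_smul μ
  have hmoment : ∫ u, ‖μ • u‖ ^ 2 ∂stdGaussian E = μ ^ 2 * finrank ℝ E := by
    have hsq : ∫ u, ‖u‖ ^ 2 ∂stdGaussian E = finrank ℝ E := by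
      simpa using integral_norm_pow_stdGaussian (E := E) 1
    simp only [norm_smul, mul_pow, integral_const_mul, Real.norm_eq_abs, sq_abs, hsq]
  calc ‖∇ (gaussianSmoothing f μ) x - ∇ f x‖ ^ 2
      = ‖fderiv ℝ (gaussianSmoothing f μ) x - fderiv ℝ f x‖ ^ 2 := by
        rw [gradient, gradient, ← map_sub, LinearIsometryEquiv.norm_map]
    _ ≤ K ^ 2 * ∫ u, ‖μ • u‖ ^ 2 ∂stdGaussian E :=
        norm_fderiv_integral_comp_add_sub_sq_le hf
          (lipschitzWith_fderiv_of_lipschitzWith_gradient hK) hmem x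
    _ = μ ^ 2 * K ^ 2 * finrank ℝ E := by
        rw [hmoment]
        ring

lemma norm_twoPointGradientEstimator_sub_gradient_gaussianSmoothing_sq_le (hμ : μ ≠ 0)
    (hf : Differentiable ℝ f) (hK : LipschitzWith K (∇ f)) (x u : E) :
    ‖twoPointGradientEstimator f μ x u - ∇ (gaussianSmoothing f μ) x‖ ^ 2 ≤
      2 * ‖⟪∇ f x, u⟫ • u - ∇ f x‖ ^ 2 + μ ^ 2 * K ^ 2 * ‖u‖ ^ 6 +
        4 * (μ ^ 2 * K ^ 2 * finrank ℝ E) := by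
  have hsplit : twoPointGradientEstimator f μ x u - ∇ (gaussianSmoothing f μ) x =
      (⟪∇ f x, u⟫ • u - ∇ f x) + (twoPointGradientEstimator f μ x u - ⟪∇ f x, u⟫ • u) -
        (∇ (gaussianSmoothing f μ) x - ∇ f x) := by
    abel
  rw [hsplit]
  refine (norm_add_sub_sq_le _ _ _).trans ?_
  linarith [norm_twoPointGradientEstimator_sub_sq_le hμ hf hK x u,
    norm_gradient_gaussianSmoothing_sub_sq_le (μ := μ) hf hK x]

theorem gaussian_estimator_variance_bound_general (hμ : μ ≠ 0) (hf : Differentiable ℝ f)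
    (hK : LipschitzWith K (∇ f)) (x : E) :
    ∫ u, ‖twoPointGradientEstimator f μ x u - ∇ (gaussianSmoothing f μ) x‖ ^ 2 ∂stdGaussian E ≤
      2 * (finrank ℝ E + 1) * ‖∇ f x‖ ^ 2 + μ ^ 2 * K ^ 2 * (finrank ℝ E + 2) ^ 3 := by
  have hlinear := (integrable_norm_inner_smul_sub_sq_stdGaussian (∇ f x)).const_mul 2
  have hremainder := (integrable_norm_pow_stdGaussian (E := E) 6).const_mul (μ ^ 2 * K ^ 2 : ℝ)
  have hsixth : ∫ u, ‖u‖ ^ 6 ∂stdGaussian E =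
      finrank ℝ E * (finrank ℝ E + 2) * (finrank ℝ E + 4) := by
    rw [integral_norm_pow_stdGaussian (E := E) 3]
    simp only [Finset.prod_range_succ, Finset.prod_range_zero]
    norm_num
  calc ∫ u, ‖twoPointGradientEstimator f μ x u - ∇ (gaussianSmoothing f μ) x‖ ^ 2 ∂stdGaussian E
      ≤ ∫ u, (2 * ‖⟪∇ f x, u⟫ • u - ∇ f x‖ ^ 2 + μ ^ 2 * K ^ 2 * ‖u‖ ^ 6 +
          4 * (μ ^ 2 * K ^ 2 * finrank ℝ E)) ∂stdGaussian E :=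
        integral_mono_of_nonneg (.of_forall fun u => sq_nonneg _)
          ((hlinear.fun_add hremainder).fun_add (integrable_const _))
          (.of_forall (norm_twoPointGradientEstimator_sub_gradient_gaussianSmoothing_sq_le
            hμ hf hK x))
    _ = 2 * (finrank ℝ E + 1) * ‖∇ f x‖ ^ 2 + μ ^ 2 * K ^ 2 *
          (finrank ℝ E * (finrank ℝ E + 2) * (finrank ℝ E + 4) + 4 * finrank ℝ E) := by
        rw [integral_add (hlinear.fun_add hremainder) (integrable_const _),
          integral_add hlinear hremainder, integral_const_mul, integral_const_mul,
          integral_norm_inner_smul_sub_sq_stdGaussian, hsixth, integral_const, probReal_univ,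
          one_smul]
        ring
    _ ≤ 2 * (finrank ℝ E + 1) * ‖∇ f x‖ ^ 2 + μ ^ 2 * K ^ 2 * (finrank ℝ E + 2) ^ 3 := by
        gcongr
        linarith

end Estimator

lemma stdGaussian_eq_stdGaussian_euclideanSpace (d : ℕ) :
    stdGaussian d = ProbabilityTheory.stdGaussian (EuclideanSpace ℝ (Fin d)) :=
  map_pi_eq_stdGaussian

/-- Variance-type bound for the two-point Gaussian gradient estimator:
`E_u[‖ĝ_μ(x; u) − ∇f_μ(x)‖²] ≤ 2(2d + 9)‖∇f(x)‖² + μ² L² (d + 6)³`. -/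
theorem gaussian_estimator_variance_bound
    (d : ℕ) (L μ : ℝ) (hμ : 0 < μ)
    (f : EuclideanSpace ℝ (Fin d) → ℝ)
    (hdiff : Differentiable ℝ f)
    (hlip : ∀ x y, ‖gradient f x - gradient f y‖ ≤ L * ‖x - y‖)
    (fμ : EuclideanSpace ℝ (Fin d) → ℝ)
    (hfμ : ∀ x, fμ x = ∫ u, f (x + μ • u) ∂(stdGaussian d))
    (x : EuclideanSpace ℝ (Fin d)) :
    ∫ u, ‖((f (x + μ • u) - f x) / μ) • u - gradient fμ x‖ ^ 2 ∂(stdGaussian d)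
      ≤ 2 * (2 * (d : ℝ) + 9) * ‖gradient f x‖ ^ 2 + μ ^ 2 * L ^ 2 * ((d : ℝ) + 6) ^ 3 := by
  have hL : LipschitzWith (Real.nnabs L) (∇ f) := LipschitzWith.of_dist_le_mul fun y z => by
    simpa only [dist_eq_norm] using (hlip y z).trans (by gcongr; exact le_abs_self L)
  rw [stdGaussian_eq_stdGaussian_euclideanSpace] at hfμ ⊢
  obtain rfl : fμ = gaussianSmoothing f μ := funext hfμ
  have hbound := gaussian_estimator_variance_bound_general hμ.ne' hdiff hL x
  rw [finrank_euclideanSpace_fin, Real.coe_nnabs, sq_abs] at hbound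
  refine hbound.trans ?_
  gcongr <;> linarith
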